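/- arXiv:1709.05031 — 2 statements merged into one kernel-verified Lean document; each statement's English description precedes it below -/
import Mathlib

section
/- Let p ≥ 2 be real, c, v ∈ ℝ, and let I ⊆ ℝ be an open interval. Suppose φ : I → ℝ is twice continuously differentiable, positive, and satisfies c·φ(x) = φ(x)·(φ·φ')'(x) + φ(x)^{p−1} on I, and suppose θ : I → ℝ is differentiable with θ'(x) = −v/(2·φ(x)²) on I. Then Q(x) = φ(x)·e^{iθ(x)} satisfies the degenerate NLS traveling-wave ODE −c·Q + i·v·Q' + conj(Q)·(Q·Q')' + |Q|^{p−2}·Q = 0 on I; moreover, pointwise on I one has Im(conj(Q(x))·Q'(x)) = −v/2 and |Q(x)·Q'(x)|² = (φ(x)·φ'(x))² + v²/4. -/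
/-!
A phase `θ` whose derivative `ω` satisfies `φ² ω = -v/2` gives `Q = φ e^{iθ}` the constant momentum
density `Im (conj Q · Q') = -v/2`, and turns `Q Q'` into `(φ φ' - i v/2) e^{2iθ}`. Hence, with all
terms divided by `e^{iθ}`, the transport term `i v Q'` becomes `i v φ' - v ω φ`, while
`conj Q · (Q Q')'` becomes `φ (φ φ')' + 2 i ω φ² φ' + v ω φ`, that is,
`φ (φ φ')' - i v φ' + v ω φ`. The terms containing `v` cancel, and the real traveling-wave equation
remains.
-/

open Complex ComplexConjugate

lemma norm_mul_exp_ofReal_mul_I (a : ℂ) (t : ℝ) : ‖a * exp (t * I)‖ = ‖a‖ := by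
  rw [norm_mul, norm_exp_ofReal_mul_I, mul_one]

lemma mul_exp_mul_mul_exp (a b : ℂ) (s t : ℝ) :
    a * exp (s * I) * (b * exp (t * I)) = a * b * exp ((s + t : ℝ) * I) := by
  rw [mul_mul_mul_comm, ← exp_add, ofReal_add, add_mul]

lemma conj_mul_exp_mul_mul_exp (a b : ℂ) (s t : ℝ) :
    conj (a * exp (s * I)) * (b * exp (t * I)) = conj a * b * exp ((t - s : ℝ) * I) := by
  have conj_phase : conj (exp (s * I)) = exp ((-s : ℝ) * I) := by
    rw [← exp_conj, map_mul, conj_ofReal, conj_I, ofReal_neg, neg_mul, mul_neg]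
  rw [map_mul, conj_phase, mul_exp_mul_mul_exp, neg_add_eq_sub]

lemma hasDerivAt_mul_exp_ofReal_mul_I {x : ℝ} {a : ℝ → ℂ} {a' : ℂ} {θ : ℝ → ℝ} {ω : ℝ}
    (ha : HasDerivAt a a' x) (hθ : HasDerivAt θ ω x) :
    HasDerivAt (fun y => a y * exp (θ y * I)) ((a' + a x * ω * I) * exp (θ x * I)) x :=
  (ha.fun_mul (hθ.ofReal_comp.mul_const I).cexp).congr_deriv (by ring)

lemma conj_polar_mul_deriv (r r' ω t : ℝ) :
    conj (r * exp (t * I)) * ((r' + r * ω * I) * exp (t * I)) =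
      (r * r' : ℝ) + (r ^ 2 * ω : ℝ) * I := by
  rw [conj_mul_exp_mul_mul_exp, sub_self, ofReal_zero, zero_mul, exp_zero, mul_one, conj_ofReal]
  push_cast
  ring

lemma polar_mul_deriv (r r' ω t : ℝ) :
    r * exp (t * I) * ((r' + r * ω * I) * exp (t * I)) =
      ((r * r' : ℝ) + (r ^ 2 * ω : ℝ) * I) * exp ((t + t : ℝ) * I) := by
  rw [mul_exp_mul_mul_exp]
  push_cast
  ring

section PolarWave

variable {v : ℝ} {s : Set ℝ} {φ φ' θ ω : ℝ → ℝ} {Q : ℝ → ℂ}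

lemma hasDerivAt_polar (hs : IsOpen s)
    (hφ : ∀ x ∈ s, HasDerivAt φ (φ' x) x) (hθ : ∀ x ∈ s, HasDerivAt θ (ω x) x)
    (hQ : ∀ x ∈ s, Q x = φ x * exp (θ x * I)) {x : ℝ} (hx : x ∈ s) :
    HasDerivAt Q ((φ' x + φ x * ω x * I) * exp (θ x * I)) x :=
  (hasDerivAt_mul_exp_ofReal_mul_I (hφ x hx).ofReal_comp (hθ x hx)).congr_of_eventuallyEq
    (Filter.eventuallyEq_of_mem (hs.mem_nhds hx) hQ)

lemma hasDerivAt_polar_mul_deriv {g' : ℝ → ℝ} (hs : IsOpen s)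
    (hφ : ∀ x ∈ s, HasDerivAt φ (φ' x) x) (hθ : ∀ x ∈ s, HasDerivAt θ (ω x) x)
    (hg : ∀ x ∈ s, HasDerivAt (fun y => φ y * φ' y) (g' x) x)
    (hω : ∀ x ∈ s, φ x ^ 2 * ω x = -v / 2)
    (hQ : ∀ x ∈ s, Q x = φ x * exp (θ x * I)) {x : ℝ} (hx : x ∈ s) :
    HasDerivAt (fun y => Q y * deriv Q y)
      ((g' x + ((φ x * φ' x : ℝ) + (-v / 2 : ℝ) * I) * (ω x + ω x : ℝ) * I) *
        exp ((θ x + θ x : ℝ) * I)) x := by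
  have product_eq : ∀ y ∈ s, Q y * deriv Q y =
      ((φ y * φ' y : ℝ) + (-v / 2 : ℝ) * I) * exp ((θ y + θ y : ℝ) * I) :=
    fun y hy => by
      rw [(hasDerivAt_polar hs hφ hθ hQ hy).deriv, hQ y hy, polar_mul_deriv, hω y hy]
  exact (hasDerivAt_mul_exp_ofReal_mul_I ((hg x hx).ofReal_comp.add_const _)
    ((hθ x hx).add (hθ x hx))).congr_of_eventuallyEq
      (Filter.eventuallyEq_of_mem (hs.mem_nhds hx) product_eq)

end PolarWave

lemma polar_travelingWave_eq {c v r r' g' ω k : ℝ} (hω : r ^ 2 * ω = -v / 2)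
    (hODE : c * r = r * g' + k * r) (t : ℝ) :
    -(c : ℂ) * (r * exp (t * I)) + I * v * ((r' + r * ω * I) * exp (t * I)) +
      conj (r * exp (t * I)) *
        ((g' + ((r * r' : ℝ) + (-v / 2 : ℝ) * I) * (ω + ω : ℝ) * I) * exp ((t + t : ℝ) * I)) +
      k * (r * exp (t * I)) = 0 := by
  have hω' : (r : ℂ) ^ 2 * ω = -v / 2 := by exact_mod_cast hω
  have hODE' : (c : ℂ) * r = r * g' + k * r := by exact_mod_cast hODE
  rw [conj_mul_exp_mul_mul_exp, add_sub_cancel_right, conj_ofReal]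
  push_cast
  linear_combination exp (t * I) * (2 * I * r' * hω' - hODE')

theorem stmt_18_general {c v : ℝ} (f : ℝ → ℝ) {s : Set ℝ} (hs : IsOpen s)
    {φ φ' g' θ ω : ℝ → ℝ}
    (hφ : ∀ x ∈ s, HasDerivAt φ (φ' x) x)
    (hg : ∀ x ∈ s, HasDerivAt (fun y => φ y * φ' y) (g' x) x)
    (hODE : ∀ x ∈ s, c * φ x = φ x * g' x + f |φ x| * φ x)
    (hθ : ∀ x ∈ s, HasDerivAt θ (ω x) x)
    (hω : ∀ x ∈ s, φ x ^ 2 * ω x = -v / 2)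
    {Q : ℝ → ℂ} (hQ : ∀ x ∈ s, Q x = φ x * exp (θ x * I)) :
    ∀ x ∈ s,
      (-(c : ℂ) * Q x + I * v * deriv Q x + conj (Q x) * deriv (fun y => Q y * deriv Q y) x
        + (f ‖Q x‖ : ℂ) * Q x = 0) ∧
      (conj (Q x) * deriv Q x).im = -v / 2 ∧
      ‖Q x * deriv Q x‖ ^ 2 = (φ x * φ' x) ^ 2 + v ^ 2 / 4 := by
  intro x hx
  have norm_Q : ‖Q x‖ = |φ x| := by
    rw [hQ x hx, norm_mul_exp_ofReal_mul_I, norm_real, Real.norm_eq_abs]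
  rw [norm_Q, (hasDerivAt_polar_mul_deriv hs hφ hθ hg hω hQ hx).deriv,
    (hasDerivAt_polar hs hφ hθ hQ hx).deriv, hQ x hx]
  refine ⟨polar_travelingWave_eq (hω x hx) (hODE x hx) _, ?_, ?_⟩
  · rw [conj_polar_mul_deriv, hω x hx, ← mk_eq_add_mul_I]
  · rw [polar_mul_deriv, hω x hx, norm_mul_exp_ofReal_mul_I, ← normSq_eq_norm_sq,
      normSq_add_mul_I]
    ring

lemma abs_rpow_sub_two_mul_self {r : ℝ} (hr : 0 < r) (p : ℝ) :
    |r| ^ (p - 2) * r = r ^ (p - 1) := by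
  rw [abs_of_pos hr, ← Real.rpow_add_one hr.ne']
  ring_nf

/-- every real compacton profile φ of the real traveling-wave ODE
cφ = φ(φφ')' + φ^{p−1} upgrades, via a phase θ with θ' = −v/(2φ²), to a complex
solution Q = φe^{iθ} of the degenerate NLS traveling-wave ODE
−cQ + ivQ' + conj(Q)(QQ')' + |Q|^{p−2}Q = 0, with Im(conj(Q)Q') = −v/2 and
|QQ'|² = (φφ')² + v²/4 pointwise. -/
theorem stmt_18 (p c v : ℝ) (hp : 2 ≤ p)
    (I : Set ℝ) (hI : IsOpen I)
    (φ φ' φ'' g' θ : ℝ → ℝ)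
    (hd1 : ∀ x ∈ I, HasDerivAt φ (φ' x) x)
    (hd2 : ∀ x ∈ I, HasDerivAt φ' (φ'' x) x)
    (hc2 : ContinuousOn φ'' I)
    (hg : ∀ x ∈ I, HasDerivAt (fun y => φ y * φ' y) (g' x) x)
    (hpos : ∀ x ∈ I, 0 < φ x)
    (hODE : ∀ x ∈ I, c * φ x = φ x * g' x + φ x ^ (p - 1))
    (hθ : ∀ x ∈ I, HasDerivAt θ (-v / (2 * (φ x) ^ 2)) x)
    (Q : ℝ → ℂ)
    (hQ : ∀ x, Q x = (φ x : ℂ) * Complex.exp ((θ x : ℂ) * Complex.I)) :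
    ∀ x ∈ I,
      (-(c : ℂ) * Q x + Complex.I * (v : ℂ) * deriv Q x
        + (starRingEnd ℂ) (Q x) * deriv (fun y => Q y * deriv Q y) x
        + ((‖Q x‖ ^ (p - 2) : ℝ) : ℂ) * Q x = 0) ∧
      ((starRingEnd ℂ) (Q x) * deriv Q x).im = -v / 2 ∧
      ‖Q x * deriv Q x‖ ^ 2 = (φ x * φ' x) ^ 2 + v ^ 2 / 4 := by
  refine stmt_18_general (fun r => r ^ (p - 2)) hI hd1 hg (fun x hx => ?_) hθ (fun x hx => ?_)
    fun x _ => hQ x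
  · rw [abs_rpow_sub_two_mul_self (hpos x hx), hODE x hx]
  · have := (hpos x hx).ne'
    field_simp
end

section
/- Let c ∈ ℝ and Z > 0, and let I ⊆ ℝ be an open interval on which c + Z·cos(√2·x) > 0; set φ(x) = √(c + Z·cos(√2·x)) on I. Define the linearized operator (𝓛_φ u)(x) = −φ(x)·((φ·u)''(x) + 2·φ(x)·u(x)) for twice continuously differentiable u : I → ℝ. Then on I: (i) 𝓛_φ φ = −2c·φ, and (ii) 𝓛_φ φ' = 0. -/
/-!
Write `𝓛 = -φ (∂ₓ² + κ) φ` and `q = φ ^ 2`. Then `𝓛 φ = -φ (q'' + κ q)`, and since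
`φ φ' = q' / 2`, also `𝓛 φ' = -(φ / 2) (q'' + κ q)'`. For the profile
`q = c + Z cos (√κ x)`, the quantity `q'' + κ q` is the constant `κ c`.
-/

open Filter Topology

/-- The operator `𝓛_φ u = -φ (∂ₓ² + κ) (φ u)` obtained by linearizing the degenerate KdV equation
`∂ₜu + ∂ₓ(u ∂ₓ(u ∂ₓu) + (κ / 2) u³) = 0` around a travelling profile `φ`; `κ = 2` is the case
`p = 4`. The derivatives are `deriv`s, so they are `0` where a function is not differentiable. -/
noncomputable def linearizedOperator (κ : ℝ) (φ u : ℝ → ℝ) (x : ℝ) : ℝ :=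
  -φ x * (deriv (deriv fun y => φ y * u y) x + κ * φ x * u x)

section Operator

variable {κ c x : ℝ} {φ : ℝ → ℝ}

lemma linearizedOperator_self_of_deriv_deriv_sq
    (h : deriv (deriv fun y => φ y ^ 2) x + κ * φ x ^ 2 = κ * c) :
    linearizedOperator κ φ φ x = -κ * c * φ x := by
  simp only [linearizedOperator, ← pow_two]
  linear_combination -φ x * h

lemma mul_deriv_eq_deriv_sq_div_two (hφ : DifferentiableAt ℝ φ x) :
    φ x * deriv φ x = deriv (fun y => φ y ^ 2) x / 2 := by
  rw [deriv_fun_pow hφ]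
  ring

lemma linearizedOperator_deriv_of_deriv_deriv_sq
    (hφ : ∀ᶠ y in 𝓝 x, DifferentiableAt ℝ φ y)
    (h : ∀ᶠ y in 𝓝 x, deriv (deriv fun z => φ z ^ 2) y + κ * φ y ^ 2 = κ * c) :
    linearizedOperator κ φ (deriv φ) x = 0 := by
  have h_half : (fun y => φ y * deriv φ y) =ᶠ[𝓝 x] fun y => deriv (fun z => φ z ^ 2) y / 2 :=
    hφ.mono fun _ => mul_deriv_eq_deriv_sq_div_two
  have h_second : deriv (fun y => φ y * deriv φ y) =ᶠ[𝓝 x]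
      fun y => (κ * c - κ * φ y ^ 2) / 2 := by
    filter_upwards [h_half.deriv, h] with y h_deriv hy
    rw [h_deriv, deriv_div_const, eq_sub_of_add_eq hy]
  have h_third : deriv (deriv fun y => φ y * deriv φ y) x = -κ * (φ x * deriv φ x) := by
    rw [h_second.deriv_eq, deriv_div_const, deriv_const_sub, deriv_const_mul_field,
      h_half.eq_of_nhds]
    ring
  rw [linearizedOperator, h_third]
  ring

end Operator

lemma deriv_deriv_const_add_mul_cos (c Z ω x : ℝ) :
    deriv (deriv fun y => c + Z * Real.cos (ω * y)) x = -ω ^ 2 * (Z * Real.cos (ω * x)) := by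
  have h_first (y : ℝ) : HasDerivAt (fun z => c + Z * Real.cos (ω * z))
      (Z * (-Real.sin (ω * y) * ω)) y :=
    (((hasDerivAt_const_mul ω).cos).const_mul Z).const_add c
  have h_second : HasDerivAt (fun y => Z * (-Real.sin (ω * y) * ω))
      (Z * (-(Real.cos (ω * x) * ω) * ω)) x :=
    ((hasDerivAt_const_mul ω).sin.fun_neg.mul_const ω).const_mul Z
  rw [funext fun y => (h_first y).deriv, h_second.deriv]
  ring

lemma sq_eventuallyEq_of_eventuallyEq_sqrt {X : Type*} [TopologicalSpace X] {x : X} {f g : X → ℝ}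
    (hg : ContinuousAt g x) (hpos : 0 < g x) (hf : f =ᶠ[𝓝 x] fun y => √(g y)) :
    (fun y => f y ^ 2) =ᶠ[𝓝 x] g := by
  filter_upwards [hf, hg.eventually_const_lt hpos] with y hy hy_pos
  rw [hy, Real.sq_sqrt hy_pos.le]

lemma eventually_differentiableAt_of_eventuallyEq_sqrt {E : Type*} [NormedAddCommGroup E]
    [NormedSpace ℝ E] {x : E} {f g : E → ℝ} (hg : ∀ᶠ y in 𝓝 x, DifferentiableAt ℝ g y)
    (hpos : 0 < g x) (hf : f =ᶠ[𝓝 x] fun y => √(g y)) :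
    ∀ᶠ y in 𝓝 x, DifferentiableAt ℝ f y := by
  have h_pos : ∀ᶠ y in 𝓝 x, 0 < g y :=
    hg.self_of_nhds.continuousAt.eventually_const_lt hpos
  filter_upwards [hf.eventuallyEq_nhds, hg, h_pos] with y h_eq h_diff hy_pos
  exact (h_diff.sqrt hy_pos.ne').congr_of_eventuallyEq h_eq

theorem stmt_19_general {κ c Z x : ℝ} {φ : ℝ → ℝ} (hκ : 0 ≤ κ)
    (hpos : 0 < c + Z * Real.cos (√κ * x))
    (hφ : φ =ᶠ[𝓝 x] fun y => √(c + Z * Real.cos (√κ * y))) :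
    linearizedOperator κ φ φ x = -κ * c * φ x ∧ linearizedOperator κ φ (deriv φ) x = 0 := by
  have h_diff : Differentiable ℝ fun y => c + Z * Real.cos (√κ * y) := by fun_prop
  have h_sq : (fun y => φ y ^ 2) =ᶠ[𝓝 x] fun y => c + Z * Real.cos (√κ * y) :=
    sq_eventuallyEq_of_eventuallyEq_sqrt h_diff.continuous.continuousAt hpos hφ
  have h_ode : ∀ᶠ y in 𝓝 x, deriv (deriv fun z => φ z ^ 2) y + κ * φ y ^ 2 = κ * c := by
    filter_upwards [h_sq, h_sq.deriv.deriv] with y hy hy_deriv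
    rw [hy_deriv, hy, deriv_deriv_const_add_mul_cos, Real.sq_sqrt hκ]
    ring
  exact ⟨linearizedOperator_self_of_deriv_deriv_sq h_ode.self_of_nhds,
    linearizedOperator_deriv_of_deriv_deriv_sq
      (eventually_differentiableAt_of_eventuallyEq_sqrt (.of_forall h_diff) hpos hφ) h_ode⟩

/-- for the linearized operator 𝓛_φ u = −φ·((φu)'' + 2φu) around a
p = 4 compacton profile φ(x) = √(c + Z·cos(√2 x)) on an open interval I where the
radicand is positive: (i) 𝓛_φ φ = −2c·φ and (ii) 𝓛_φ φ' = 0 on I. -/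
theorem stmt_19 (c Z : ℝ) (hZ : 0 < Z)
    (I : Set ℝ) (hI : IsOpen I) (hIconn : IsPreconnected I)
    (hpos : ∀ x ∈ I, 0 < c + Z * Real.cos (Real.sqrt 2 * x))
    (φ : ℝ → ℝ)
    (hφ : ∀ x, φ x = Real.sqrt (c + Z * Real.cos (Real.sqrt 2 * x))) :
    (∀ x ∈ I,
      -φ x * (deriv (deriv (fun y => φ y * φ y)) x + 2 * φ x * φ x)
        = -2 * c * φ x) ∧
    (∀ x ∈ I,
      -φ x * (deriv (deriv (fun y => φ y * deriv φ y)) x + 2 * φ x * deriv φ x)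
        = 0) :=
  forall₂_and.mp fun x hx => stmt_19_general zero_le_two (hpos x hx) (.of_forall hφ)
end
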